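/- arXiv:2011.09495 — 9 statements merged into one kernel-verified Lean document; each statement's English description precedes it below -/
import Mathlib

section
/- Let ℓ ≥ 1 be an integer and let p ∈ (0, π) satisfy sin(ℓp) ≠ 0. Then f_ℓ is differentiable at p with f_ℓ'(p) ≤ 0; moreover, if additionally sin((ℓ+1)p) ≠ 0, then f_ℓ'(p) = f_ℓ(p)·((ℓ+1)·cot((ℓ+1)p) − ℓ·cot(ℓp)). -/
/-- `f ℓ p = sin((ℓ+1)p) / sin(ℓp)`. -/
noncomputable def quasiF (ℓ : ℕ) (p : ℝ) : ℝ :=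
  Real.sin ((ℓ + 1) * p) / Real.sin (ℓ * p)

theorem abs_sin_nat_mul_le (n : ℕ) (p : ℝ) : |Real.sin (n * p)| ≤ n * |Real.sin p| := by
  induction n with
  | zero => simp
  | succ k ih =>
    have e : Real.sin (((k + 1 : ℕ) : ℝ) * p)
        = Real.sin (k * p) * Real.cos p + Real.cos (k * p) * Real.sin p := by
      rw [← Real.sin_add]; push_cast; ring_nf
    rw [e]
    refine (abs_add_le _ _).trans ?_
    rw [abs_mul, abs_mul]
    have h1 := mul_le_of_le_one_right (abs_nonneg (Real.sin (k * p))) (Real.abs_cos_le_one p)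
    have h2 := mul_le_of_le_one_left (abs_nonneg (Real.sin p)) (Real.abs_cos_le_one (k * p))
    push_cast
    linarith

theorem quasiF_deriv_nonpos (ℓ : ℕ) (hℓ : 1 ≤ ℓ) (p : ℝ)
    (hp : p ∈ Set.Ioo 0 Real.pi) (hs : Real.sin (ℓ * p) ≠ 0) :
    DifferentiableAt ℝ (quasiF ℓ) p ∧ deriv (quasiF ℓ) p ≤ 0 ∧
    (Real.sin ((ℓ + 1) * p) ≠ 0 →
      deriv (quasiF ℓ) p =
        quasiF ℓ p *
          ((ℓ + 1) * (Real.cos ((ℓ + 1) * p) / Real.sin ((ℓ + 1) * p)) -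
            ℓ * (Real.cos (ℓ * p) / Real.sin (ℓ * p)))) := by
  have hd : HasDerivAt (quasiF ℓ)
      ((Real.cos ((ℓ + 1) * p) * (ℓ + 1) * Real.sin (ℓ * p)
        - Real.sin ((ℓ + 1) * p) * (Real.cos (ℓ * p) * ℓ)) / Real.sin (ℓ * p) ^ 2) p := by
    have h1 : HasDerivAt (fun x : ℝ => Real.sin (((ℓ : ℝ) + 1) * x))
        (Real.cos ((ℓ + 1) * p) * (ℓ + 1)) p := by
      simpa using ((hasDerivAt_id p).const_mul ((ℓ : ℝ) + 1)).sin
    have h2 : HasDerivAt (fun x : ℝ => Real.sin ((ℓ : ℝ) * x))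
        (Real.cos (ℓ * p) * ℓ) p := by
      simpa using ((hasDerivAt_id p).const_mul (ℓ : ℝ)).sin
    exact h1.div h2 hs
  refine ⟨hd.differentiableAt, ?_, ?_⟩
  · rw [hd.deriv]
    refine div_nonpos_of_nonpos_of_nonneg ?_ (sq_nonneg _)
    have hsp := Real.sin_pos_of_mem_Ioo hp
    have hb := abs_sin_nat_mul_le ℓ p
    rw [abs_of_pos hsp] at hb
    have e : Real.sin p = Real.sin ((ℓ + 1) * p) * Real.cos (ℓ * p)
        - Real.cos ((ℓ + 1) * p) * Real.sin (ℓ * p) := by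
      rw [← Real.sin_sub]; ring_nf
    have hc : Real.cos ((ℓ + 1) * p) * Real.sin (ℓ * p) ≤ |Real.sin (ℓ * p)| := by
      refine (le_abs_self _).trans ?_
      rw [abs_mul]
      exact mul_le_of_le_one_left (abs_nonneg _) (Real.abs_cos_le_one _)
    have e2 := congrArg (fun t => (ℓ : ℝ) * t) e
    linarith
  · intro h
    rw [hd.deriv, quasiF]
    field_simp
end

section
/- Let ℓ ≥ 1 be an integer and p ∈ (0, π). Then sin((ℓ+1)p) = sin(ℓp) if and only if p = (2j−1)π/(2ℓ+1) for some integer j with 1 ≤ j ≤ ℓ; and sin((ℓ+1)p) = −sin(ℓp) if and only if p = 2jπ/(2ℓ+1) for some integer j with 1 ≤ j ≤ ℓ. -/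
theorem aux_bounds (p : ℝ) (h0 : 0 < p) (h1 : p < Real.pi) (m n : ℤ) (hm : 0 < m)
    (h : (m : ℝ) * p = n * Real.pi) : 0 < n ∧ n < m := by
  have hpi := Real.pi_pos
  have hm' : (0 : ℝ) < m := by exact_mod_cast hm
  constructor
  · have : (0 : ℝ) < n := by
      have h2 : 0 < (n : ℝ) * Real.pi := h ▸ mul_pos hm' h0
      exact pos_of_mul_pos_left h2 hpi.le
    exact_mod_cast this
  · have : (n : ℝ) < m := by
      have h2 : (n : ℝ) * Real.pi < m * Real.pi := h ▸ mul_lt_mul_of_pos_left h1 hm'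
      exact lt_of_mul_lt_mul_right h2 hpi.le
    exact_mod_cast this

theorem quasimomenta_solutions_alpha_pm_one (ℓ : ℕ) (hℓ : 1 ≤ ℓ) (p : ℝ)
    (hp : p ∈ Set.Ioo 0 Real.pi) :
    (Real.sin ((ℓ + 1) * p) = Real.sin (ℓ * p) ↔
      ∃ j : ℕ, 1 ≤ j ∧ j ≤ ℓ ∧ p = (2 * (j : ℝ) - 1) * Real.pi / (2 * ℓ + 1)) ∧
    (Real.sin ((ℓ + 1) * p) = -Real.sin (ℓ * p) ↔
      ∃ j : ℕ, 1 ≤ j ∧ j ≤ ℓ ∧ p = 2 * (j : ℝ) * Real.pi / (2 * ℓ + 1)) := by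
  obtain ⟨h0, h1⟩ := hp
  have hd : (2 * (ℓ : ℝ) + 1) ≠ 0 := by positivity
  constructor
  · rw [Real.sin_eq_sin_iff]
    constructor
    · rintro ⟨k, h | h⟩
      · have := aux_bounds p h0 h1 1 (-2 * k) (by norm_num) (by push_cast; linarith)
        omega
      · have := aux_bounds p h0 h1 (2 * ℓ + 1) (2 * k + 1) (by positivity)
          (by push_cast; linarith)
        obtain ⟨j, hj⟩ := Int.eq_ofNat_of_zero_le (show 0 ≤ k by omega)
        subst hj
        refine ⟨j + 1, by omega, by omega, ?_⟩
        rw [eq_div_iff hd]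
        push_cast at h ⊢
        linarith
    · rintro ⟨j, -, -, h⟩
      rw [eq_div_iff hd] at h
      refine ⟨(j : ℤ) - 1, Or.inr ?_⟩
      push_cast
      linarith
  · rw [← Real.sin_neg, Real.sin_eq_sin_iff]
    constructor
    · rintro ⟨k, h | h⟩
      · have := aux_bounds p h0 h1 (2 * ℓ + 1) (-2 * k) (by positivity)
          (by push_cast; linarith)
        obtain ⟨j, hj⟩ := Int.eq_ofNat_of_zero_le (show 0 ≤ -k by omega)
        obtain rfl : k = -(j : ℤ) := by omega
        refine ⟨j, by omega, by omega, ?_⟩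
        rw [eq_div_iff hd]
        push_cast at h ⊢
        linarith
      · have := aux_bounds p h0 h1 1 (2 * k + 1) (by norm_num) (by push_cast; linarith)
        omega
    · rintro ⟨j, -, -, h⟩
      rw [eq_div_iff hd] at h
      refine ⟨-(j : ℤ), Or.inl ?_⟩
      push_cast
      linarith
end

section
/- Let ℓ ≥ 1 be an integer, let α ∈ ℝ, and let p, q ∈ (0, π) be distinct points with sin(ℓp) ≠ 0, sin(ℓq) ≠ 0, sin((ℓ+1)p) = α·sin(ℓp), and sin((ℓ+1)q) = α·sin(ℓq). Then |p − q| ≥ π/(2ℓ+1). -/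
open Real in
lemma aux_mono (n : ℕ) (d t : ℝ) (hd : 0 < d) (hdt : d < t) (h : ((n : ℝ) + 2) * t ≤ π) :
    sin (((n : ℝ) + 2) * t) * sin d < sin (((n : ℝ) + 2) * d) * sin t := by
  have ht : 0 < t := hd.trans hdt
  have hn : (0 : ℝ) ≤ n := n.cast_nonneg
  have htpi : t < π := by nlinarith
  have hst : 0 < sin t := sin_pos_of_pos_of_lt_pi ht htpi
  have hsd : 0 < sin d := sin_pos_of_pos_of_lt_pi hd (hdt.trans htpi)
  have hc : cos t < cos d := cos_lt_cos_of_nonneg_of_le_pi hd.le htpi.le hdt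
  induction n with
  | zero =>
    simp only [Nat.cast_zero, zero_add, sin_two_mul]
    nlinarith [mul_pos (mul_pos hst hsd) (sub_pos.2 hc)]
  | succ m ih =>
    have hm : (0 : ℝ) ≤ m := m.cast_nonneg
    push_cast at h ⊢
    have h' : ((m : ℝ) + 2) * t ≤ π := by nlinarith
    have i := ih h' hm
    have e : ∀ x : ℝ, ((m : ℝ) + 1 + 2) * x = (m + 2) * x + x := fun x => by ring
    rw [e t, e d, sin_add, sin_add]
    have hc2 : cos (((m : ℝ) + 2) * t) < cos (((m : ℝ) + 2) * d) :=
      cos_lt_cos_of_nonneg_of_le_pi (by positivity) h' (by gcongr)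
    have hs2 : 0 < sin (((m : ℝ) + 2) * d) := by
      apply sin_pos_of_pos_of_lt_pi (by positivity)
      have : ((m : ℝ) + 2) * d < (m + 2) * t := by gcongr
      linarith
    have hct : 0 < cos t := by
      apply cos_pos_of_mem_Ioo
      constructor <;> nlinarith [pi_pos]
    nlinarith [mul_pos (sub_pos.2 i) hct, mul_pos (mul_pos hst hsd) (sub_pos.2 hc2),
      mul_pos (mul_pos hs2 hst) (sub_pos.2 hc)]

open Real in
lemma aux_gap (ℓ : ℕ) (hℓ : 1 ≤ ℓ) (α p q : ℝ)
    (hp : p < π) (hq : 0 < q) (hpq : q < p)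
    (hep : sin ((ℓ + 1) * p) = α * sin (ℓ * p))
    (heq : sin ((ℓ + 1) * q) = α * sin (ℓ * q)) :
    π / (2 * ℓ + 1) ≤ p - q := by
  by_contra! hlt
  obtain ⟨k, rfl⟩ : ∃ k, ℓ = k + 1 := ⟨ℓ - 1, by omega⟩
  have hpi := pi_pos
  obtain ⟨s, hs⟩ : ∃ s, s = (p + q) / 2 := ⟨_, rfl⟩
  obtain ⟨d, hd⟩ : ∃ d, d = (p - q) / 2 := ⟨_, rfl⟩
  obtain ⟨N, hN⟩ : ∃ N : ℝ, N = ((2 * k + 1 : ℕ) : ℝ) + 2 := ⟨_, rfl⟩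
  have hp' : p = s + d := by rw [hs, hd]; ring
  have hq' : q = s - d := by rw [hs, hd]; ring
  have hNk : N = 2 * ((k + 1 : ℕ) : ℝ) + 1 := by rw [hN]; push_cast; ring
  have hL : ((k + 1 : ℕ) : ℝ) = (N - 1) / 2 := by rw [hNk]; ring
  have hN3 : 3 ≤ N := by
    have : (0 : ℝ) ≤ k := k.cast_nonneg
    rw [hN]; push_cast; linarith
  have hN0 : 0 < N := by linarith
  rw [← hNk] at hlt
  have mono : ∀ t, d < t → N * t ≤ π → sin (N * t) * sin d < sin (N * d) * sin t := by
    intro t h1 h2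
    rw [hN] at h2 ⊢
    exact aux_mono _ d t (by linarith) h1 h2
  have key : sin s * sin (N * d) = sin (N * s) * sin d := by
    have h : sin ((((k + 1 : ℕ) : ℝ) + 1) * p) * sin (((k + 1 : ℕ) : ℝ) * q)
        = sin ((((k + 1 : ℕ) : ℝ) + 1) * q) * sin (((k + 1 : ℕ) : ℝ) * p) := by
      rw [hep, heq]; ring
    have two : ∀ x y : ℝ, 2 * (sin x * sin y) = cos (x - y) - cos (x + y) := by
      intro x y; rw [cos_sub, cos_add]; ring
    have h2 := congrArg (fun x => 2 * x) h
    simp only [two] at h2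
    rw [hL, hp', hq'] at h2
    have e1 : ((N - 1) / 2 + 1) * (s + d) - (N - 1) / 2 * (s - d) = s + N * d := by ring
    have e2 : ((N - 1) / 2 + 1) * (s + d) + (N - 1) / 2 * (s - d) = N * s + d := by ring
    have e3 : ((N - 1) / 2 + 1) * (s - d) - (N - 1) / 2 * (s + d) = s - N * d := by ring
    have e4 : ((N - 1) / 2 + 1) * (s - d) + (N - 1) / 2 * (s + d) = N * s - d := by ring
    rw [e1, e2, e3, e4] at h2
    simp only [cos_add, cos_sub] at h2
    linarith
  have hd0 : 0 < d := by linarith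
  have hds : d < s := by linarith
  have hds' : d < π - s := by linarith
  obtain ⟨t, ht⟩ : ∃ t, t = π / N / 2 := ⟨_, rfl⟩
  have hNt : N * t = π / 2 := by rw [ht]; field_simp
  have hdt : d < t := by rw [hd, ht]; linarith
  rcases lt_or_ge s t with h1 | h1
  · have := mono s hds (by nlinarith)
    linarith
  rcases lt_or_ge (π - s) t with h2 | h2
  · have := mono (π - s) hds' (by nlinarith)
    have e : sin (N * (π - s)) = sin (N * s) := by
      have : N * (π - s) = π - N * s + ((k + 1 : ℕ) : ℝ) * (2 * π) := by rw [hNk]; ring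
      rw [this, sin_add_nat_mul_two_pi, sin_pi_sub]
    rw [e, sin_pi_sub] at this
    linarith
  · have h := mono t hdt (by rw [hNt]; linarith)
    rw [hNt, sin_pi_div_two] at h
    have hts : sin t ≤ sin s := by
      rcases le_total s (π / 2) with h3 | h3
      · exact sin_le_sin_of_le_of_le_pi_div_two (by linarith) h3 h1
      · rw [← sin_pi_sub s]
        exact sin_le_sin_of_le_of_le_pi_div_two (by linarith) (by linarith) h2
    have hNd : 0 < sin (N * d) := by
      apply sin_pos_of_pos_of_lt_pi (by positivity)
      have : N * d < N * t := by gcongr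
      linarith
    have hsd : 0 < sin d := sin_pos_of_pos_of_lt_pi hd0 (by linarith)
    nlinarith [sin_le_one (N * s), mul_le_mul_of_nonneg_left hts hNd.le,
      mul_le_mul_of_nonneg_right (sin_le_one (N * s)) hsd.le]

theorem quasimomenta_solutions_gap (ℓ : ℕ) (hℓ : 1 ≤ ℓ) (α p q : ℝ)
    (hp : p ∈ Set.Ioo 0 Real.pi) (hq : q ∈ Set.Ioo 0 Real.pi) (hpq : p ≠ q)
    (hsp : Real.sin (ℓ * p) ≠ 0) (hsq : Real.sin (ℓ * q) ≠ 0)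
    (hep : Real.sin ((ℓ + 1) * p) = α * Real.sin (ℓ * p))
    (heq : Real.sin ((ℓ + 1) * q) = α * Real.sin (ℓ * q)) :
    |p - q| ≥ Real.pi / (2 * ℓ + 1) := by
  rcases lt_or_gt_of_ne hpq with h | h
  · have := aux_gap ℓ hℓ α q p hq.2 hp.1 h heq hep
    rw [abs_sub_comm]
    exact this.trans (le_abs_self _)
  · exact (aux_gap ℓ hℓ α p q hp.2 hq.1 h hep heq).trans (le_abs_self _)
end

section
/- Let ℓ ≥ 1 be an integer and let p ∈ (0, π) satisfy sin(ℓp) ≠ 0 and sin((ℓ+1)p) = α·sin(ℓp). If α ∈ [−1, 1], then p lies in the union over j = 1,…,ℓ of the closed intervals [(2j−1)π/(2ℓ+1), 2jπ/(2ℓ+1)]. If |α| > 1, then p lies in none of the open intervals ((2j−1)π/(2ℓ+1), 2jπ/(2ℓ+1)) for j = 1,…,ℓ. -/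
theorem quasimomenta_solutions_location (ℓ : ℕ) (hℓ : 1 ≤ ℓ) (α p : ℝ)
    (hp : p ∈ Set.Ioo 0 Real.pi) (hs : Real.sin (ℓ * p) ≠ 0)
    (he : Real.sin ((ℓ + 1) * p) = α * Real.sin (ℓ * p)) :
    (α ∈ Set.Icc (-1 : ℝ) 1 →
      ∃ j : ℕ, 1 ≤ j ∧ j ≤ ℓ ∧
        p ∈ Set.Icc ((2 * (j : ℝ) - 1) * Real.pi / (2 * ℓ + 1))
          (2 * (j : ℝ) * Real.pi / (2 * ℓ + 1))) ∧
    (1 < |α| →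
      ∀ j : ℕ, 1 ≤ j → j ≤ ℓ →
        p ∉ Set.Ioo ((2 * (j : ℝ) - 1) * Real.pi / (2 * ℓ + 1))
          (2 * (j : ℝ) * Real.pi / (2 * ℓ + 1))) := by
  obtain ⟨hp0, hp1⟩ := hp
  have hπ := Real.pi_pos
  have hsp : 0 < Real.sin p := Real.sin_pos_of_pos_of_lt_pi hp0 hp1
  have hL : (0 : ℝ) < 2 * ℓ + 1 := by positivity
  have key : Real.sin ((2 * ℓ + 1) * p) * Real.sin p = (α ^ 2 - 1) * Real.sin (ℓ * p) ^ 2 := by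
    have h1 : Real.sin ((ℓ + 1) * p) ^ 2 - Real.sin (ℓ * p) ^ 2
        = Real.sin ((2 * ℓ + 1) * p) * Real.sin p := by
      have e1 : ((ℓ : ℝ) + 1) * p = ℓ * p + p := by ring
      have e2 : (2 * (ℓ : ℝ) + 1) * p = ℓ * p + (ℓ * p + p) := by ring
      rw [e2, e1, Real.sin_add (ℓ * p) (ℓ * p + p), Real.sin_add, Real.cos_add]
      linear_combination (-Real.sin (ℓ * p) ^ 2) * Real.sin_sq_add_cos_sq p * (-1)
    rw [← h1, he]; ring
  have hs2 : 0 < Real.sin (ℓ * p) ^ 2 := by positivity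
  constructor
  · rintro ⟨ha, hb⟩
    have hx : Real.sin ((2 * ℓ + 1) * p) ≤ 0 := by
      by_contra! h
      have h1 := mul_pos h hsp
      rw [key] at h1
      have h2 : α ^ 2 - 1 ≤ 0 := by nlinarith
      nlinarith
    have hx0 : 0 < (2 * ℓ + 1) * p := mul_pos hL hp0
    have hx1 : (2 * ℓ + 1) * p < (2 * ℓ + 1) * Real.pi := mul_lt_mul_of_pos_left hp1 hL
    generalize hxd : (2 * (ℓ : ℝ) + 1) * p = x at *
    have hy : 0 ≤ (x + Real.pi) / (2 * Real.pi) := by positivity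
    have f1 := Nat.floor_le hy
    have f2 := Nat.lt_floor_add_one ((x + Real.pi) / (2 * Real.pi))
    generalize ⌊(x + Real.pi) / (2 * Real.pi)⌋₊ = j at *
    rw [le_div_iff₀ (by positivity)] at f1
    rw [div_lt_iff₀ (by positivity)] at f2
    have h3 : x ≤ 2 * j * Real.pi := by
      by_contra! h
      have : 0 < Real.sin (x - j * (2 * Real.pi)) :=
        Real.sin_pos_of_pos_of_lt_pi (by linarith) (by linarith)
      rw [Real.sin_sub_nat_mul_two_pi] at this
      linarith
    refine ⟨j, ?_, ?_, ?_, ?_⟩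
    · rcases Nat.eq_zero_or_pos j with h | h
      · subst h
        norm_num at h3
        linarith
      · exact h
    · have : (j : ℝ) < ℓ + 1 := by
        by_contra! h
        nlinarith
      have h4 : j < ℓ + 1 := by exact_mod_cast this
      omega
    · rw [div_le_iff₀ hL]; linarith
    · rw [le_div_iff₀ hL]; linarith
  · rintro ha j - - ⟨h1, h2⟩
    rw [div_lt_iff₀ hL] at h1
    rw [lt_div_iff₀ hL] at h2
    have h3 : Real.sin ((2 * ℓ + 1) * p - j * (2 * Real.pi)) < 0 :=
      Real.sin_neg_of_neg_of_neg_pi_lt (by linarith) (by linarith)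
    rw [Real.sin_sub_nat_mul_two_pi] at h3
    have h4 : 1 < α ^ 2 := by
      rw [← sq_abs]; nlinarith
    have h5 := mul_neg_of_neg_of_pos h3 hsp
    rw [key] at h5
    nlinarith [mul_pos (sub_pos.2 h4) hs2]
end

section
/- Let ℓ ≥ 1 be an integer and for each j ∈ {1,…,ℓ} consider the open interval I_j := ((j−1)π/ℓ, jπ/ℓ). Then f_ℓ is strictly decreasing on each I_j. -/
theorem aux_abs_sin (p : ℝ) (hp : 0 ≤ Real.sin p) (n : ℕ) :
    |Real.sin (n * p)| ≤ n * Real.sin p := by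
  induction n with
  | zero => simp
  | succ k ih =>
    have e : ((k + 1 : ℕ) : ℝ) * p = k * p + p := by push_cast; ring
    rw [e, Real.sin_add]
    have h1 := abs_add_le (Real.sin (k * p) * Real.cos p) (Real.cos (k * p) * Real.sin p)
    rw [abs_mul, abs_mul, abs_of_nonneg hp] at h1
    have h2 := mul_le_mul_of_nonneg_left (Real.abs_cos_le_one p) (abs_nonneg (Real.sin (k * p)))
    have h3 := mul_le_mul_of_nonneg_right (Real.abs_cos_le_one (k * p)) hp
    push_cast
    linarith

theorem quasiF_strictAntiOn (ℓ : ℕ) (hℓ : 1 ≤ ℓ) (j : ℕ) (hj1 : 1 ≤ j) (hj2 : j ≤ ℓ) :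
    StrictAntiOn (fun p : ℝ => Real.sin ((ℓ + 1) * p) / Real.sin (ℓ * p))
      (Set.Ioo (((j : ℝ) - 1) * Real.pi / ℓ) ((j : ℝ) * Real.pi / ℓ)) := by
  have hl : (0 : ℝ) < ℓ := by exact_mod_cast hℓ
  have hpi := Real.pi_pos
  have hj1' : (1 : ℝ) ≤ j := by exact_mod_cast hj1
  have hj2' : (j : ℝ) ≤ ℓ := by exact_mod_cast hj2
  have hne : ∀ p ∈ Set.Ioo (((j : ℝ) - 1) * Real.pi / ℓ) ((j : ℝ) * Real.pi / ℓ),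
      Real.sin (ℓ * p) ≠ 0 := by
    rintro p ⟨h1, h2⟩ h0
    rw [div_lt_iff₀ hl] at h1
    rw [lt_div_iff₀ hl] at h2
    obtain ⟨n, hn⟩ := Real.sin_eq_zero_iff.1 h0
    have a1 : ((j : ℝ) - 1) < n := by
      refine lt_of_mul_lt_mul_right ?_ hpi.le
      linarith
    have a2 : (n : ℝ) < j := by
      refine lt_of_mul_lt_mul_right ?_ hpi.le
      linarith
    have a1' : (j : ℤ) - 1 < n := by exact_mod_cast a1
    have a2' : n < (j : ℤ) := by exact_mod_cast a2
    omega
  have hd : ∀ p ∈ Set.Ioo (((j : ℝ) - 1) * Real.pi / ℓ) ((j : ℝ) * Real.pi / ℓ),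
      HasDerivAt (fun p : ℝ => Real.sin ((ℓ + 1) * p) / Real.sin (ℓ * p))
        ((Real.cos ((ℓ + 1) * p) * ((ℓ + 1) * 1) * Real.sin (ℓ * p)
          - Real.sin ((ℓ + 1) * p) * (Real.cos (ℓ * p) * (ℓ * 1))) / Real.sin (ℓ * p) ^ 2) p := by
    intro p hp
    exact (((hasDerivAt_id p).const_mul ((ℓ : ℝ) + 1)).sin).div
      (((hasDerivAt_id p).const_mul (ℓ : ℝ)).sin) (hne p hp)
  refine strictAntiOn_of_deriv_neg (convex_Ioo _ _)
    (fun p hp => (hd p hp).continuousAt.continuousWithinAt) ?_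
  intro p hp
  rw [interior_Ioo] at hp
  rw [(hd p hp).deriv]
  have hs := hne p hp
  have hs2 : 0 < Real.sin (ℓ * p) ^ 2 := by positivity
  refine div_neg_of_neg_of_pos ?_ hs2
  have hp0 : 0 < p := lt_of_le_of_lt (by
    apply div_nonneg _ hl.le
    exact mul_nonneg (by linarith) hpi.le) hp.1
  have hp1 : p < Real.pi := lt_of_lt_of_le hp.2 (by
    rw [div_le_iff₀ hl]; nlinarith)
  have hsp := Real.sin_pos_of_pos_of_lt_pi hp0 hp1
  have hb := aux_abs_sin p hsp.le ℓ
  have e : ((ℓ : ℝ) + 1) * p = ℓ * p + p := by ring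
  rw [e, Real.sin_add, Real.cos_add]
  have h1 : Real.sin (ℓ * p) * (Real.cos (ℓ * p) * Real.cos p) ≤ |Real.sin (ℓ * p)| := by
    refine (le_abs_self _).trans ?_
    rw [abs_mul, abs_mul]
    exact mul_le_of_le_one_right (abs_nonneg _)
      (mul_le_one₀ (Real.abs_cos_le_one _) (abs_nonneg _) (Real.abs_cos_le_one _))
  have h2 := mul_pos hs2 hsp
  have h3 := Real.sin_sq_add_cos_sq (ℓ * p)
  have key : (Real.cos (ℓ * p) * Real.cos p - Real.sin (ℓ * p) * Real.sin p) * (((ℓ : ℝ) + 1) * 1)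
      * Real.sin (ℓ * p) - (Real.sin (ℓ * p) * Real.cos p + Real.cos (ℓ * p) * Real.sin p)
      * (Real.cos (ℓ * p) * (ℓ * 1)) = Real.sin (ℓ * p) * (Real.cos (ℓ * p) * Real.cos p)
      - Real.sin (ℓ * p) ^ 2 * Real.sin p - ℓ * Real.sin p := by
    linear_combination (-(ℓ : ℝ) * Real.sin p) * h3
  rw [key]
  linarith
end

section
/- Let ℓ ≥ 1 be an integer and define S(α) := { p ∈ (0, π) : sin(ℓp) ≠ 0 and sin((ℓ+1)p) = α·sin(ℓp) }. If 0 ≤ α < (ℓ+1)/ℓ, then S(α) has exactly ℓ elements; if α ≥ (ℓ+1)/ℓ, then S(α) has exactly ℓ−1 elements. -/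
lemma qm_sin_weak (n : ℕ) (x : ℝ) (hx : 0 ≤ Real.sin x) :
    |Real.sin (n * x)| ≤ n * Real.sin x := by
  induction n with
  | zero => simp
  | succ n ih =>
    have e : ((n + 1 : ℕ) : ℝ) * x = n * x + x := by push_cast; ring
    rw [e, Real.sin_add]
    have h1 := abs_add_le (Real.sin (n * x) * Real.cos x) (Real.cos (n * x) * Real.sin x)
    rw [abs_mul, abs_mul, abs_of_nonneg hx] at h1
    have h2 := mul_le_mul_of_nonneg_left (Real.abs_cos_le_one x) (abs_nonneg (Real.sin (n * x)))
    have h3 := mul_le_mul_of_nonneg_right (Real.abs_cos_le_one (n * x)) hx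
    push_cast
    linarith

lemma qm_sin_strict (n : ℕ) (hn : 1 ≤ n) (x : ℝ) (hx : 0 < Real.sin x) :
    Real.sin ((n + 1) * x) < (n + 1) * Real.sin x := by
  have e : ((n : ℝ) + 1) * x = n * x + x := by ring
  rw [e, Real.sin_add]
  have h0 := qm_sin_weak n x hx.le
  have hc : |Real.cos x| < 1 := by
    rw [← sq_lt_one_iff_abs_lt_one]
    nlinarith [Real.sin_sq_add_cos_sq x]
  have h1 : Real.sin (n * x) * Real.cos x ≤ |Real.sin (n * x)| * |Real.cos x| := by
    rw [← abs_mul]; exact le_abs_self _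
  have hn' : (0 : ℝ) < n := by exact_mod_cast hn
  have h2 : |Real.sin (n * x)| * |Real.cos x| ≤ n * Real.sin x * |Real.cos x| :=
    mul_le_mul_of_nonneg_right h0 (abs_nonneg _)
  have h3 : n * Real.sin x * |Real.cos x| < n * Real.sin x * 1 :=
    mul_lt_mul_of_pos_left hc (by positivity)
  have h4 := mul_le_mul_of_nonneg_right (Real.cos_le_one (n * x)) hx.le
  linarith

lemma qm_sign (k : ℕ) (y : ℝ) : (-1 : ℝ) ^ k * Real.sin y = Real.sin (y - k * Real.pi) := by
  rw [Real.sin_sub_nat_mul_pi]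

lemma qm_pos (ℓ k : ℕ) (p : ℝ) (h1 : k * Real.pi < ℓ * p) (h2 : ℓ * p < (k + 1) * Real.pi) :
    0 < (-1 : ℝ) ^ k * Real.sin (ℓ * p) := by
  rw [qm_sign]
  exact Real.sin_pos_of_pos_of_lt_pi (by linarith) (by linarith)

lemma qm_bound (ℓ k : ℕ) (hk : k < ℓ) (p : ℝ) (h1 : k * Real.pi < ℓ * p)
    (h2 : ℓ * p < (k + 1) * Real.pi) : 0 < p ∧ p < Real.pi := by
  have hℓ : (0 : ℝ) < ℓ := by exact_mod_cast (by omega : 0 < ℓ)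
  have hk' : (k : ℝ) + 1 ≤ ℓ := by exact_mod_cast hk
  have hp := Real.pi_pos
  have : 0 ≤ (k : ℝ) * Real.pi := by positivity
  constructor
  · by_contra h
    nlinarith
  · by_contra h
    nlinarith

lemma qm_anti (ℓ k : ℕ) (hk : k < ℓ) :
    StrictAntiOn (fun p : ℝ => Real.sin ((ℓ + 1) * p) / Real.sin (ℓ * p))
      (Set.Ioo (k * Real.pi / ℓ) ((k + 1) * Real.pi / ℓ)) := by
  have hℓ : (0 : ℝ) < ℓ := by exact_mod_cast (by omega : 0 < ℓ)
  have key : ∀ p ∈ Set.Ioo (k * Real.pi / ℓ) ((k + 1) * Real.pi / ℓ),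
      Real.sin (ℓ * p) ≠ 0 ∧ 0 < Real.sin p := by
    rintro p ⟨h1, h2⟩
    rw [div_lt_iff₀ hℓ, mul_comm p] at h1
    rw [lt_div_iff₀ hℓ, mul_comm p] at h2
    have h := qm_bound ℓ k hk p h1 h2
    refine ⟨fun h0 => ?_, Real.sin_pos_of_pos_of_lt_pi h.1 h.2⟩
    have := qm_pos ℓ k p h1 h2
    simp [h0] at this
  have hd : ∀ p ∈ Set.Ioo (k * Real.pi / ℓ) ((k + 1) * Real.pi / ℓ),
      HasDerivAt (fun p : ℝ => Real.sin ((ℓ + 1) * p) / Real.sin (ℓ * p))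
        ((Real.cos ((ℓ + 1) * p) * ((ℓ + 1) * 1) * Real.sin (ℓ * p) -
          Real.sin ((ℓ + 1) * p) * (Real.cos (ℓ * p) * (ℓ * 1))) / Real.sin (ℓ * p) ^ 2) p := by
    intro p hp
    exact (((hasDerivAt_id p).const_mul ((ℓ : ℝ) + 1)).sin).div
      (((hasDerivAt_id p).const_mul (ℓ : ℝ)).sin) (key p hp).1
  apply strictAntiOn_of_deriv_neg (convex_Ioo _ _)
  · intro p hp
    exact (hd p hp).continuousAt.continuousWithinAt
  · intro p hp
    rw [interior_Ioo] at hp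
    rw [(hd p hp).deriv]
    obtain ⟨hs, hsp⟩ := key p hp
    apply div_neg_of_neg_of_pos _ (by positivity)
    have h := qm_sin_strict (2 * ℓ) (by omega) p hsp
    have e1 : ((2 * ℓ : ℕ) + 1 : ℝ) * p = (ℓ + 1) * p + ℓ * p := by push_cast; ring
    rw [e1, Real.sin_add] at h
    have e2 : Real.sin p = Real.sin ((ℓ + 1) * p) * Real.cos (ℓ * p)
        - Real.cos ((ℓ + 1) * p) * Real.sin (ℓ * p) := by
      rw [← Real.sin_sub]; congr 1; ring
    push_cast at h
    rw [e2] at h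
    linarith

lemma qm_count (ℓ : ℕ) (hℓ : 1 ≤ ℓ) (α : ℝ) (K : Finset ℕ) (hK : ∀ k ∈ K, k < ℓ)
    (hex : ∀ k ∈ K, ∃ p : ℝ, k * Real.pi < ℓ * p ∧ ℓ * p < (k + 1) * Real.pi ∧
      Real.sin ((ℓ + 1) * p) = α * Real.sin (ℓ * p))
    (hno : ∀ k < ℓ, ∀ p : ℝ, k * Real.pi < ℓ * p → ℓ * p < (k + 1) * Real.pi →
      Real.sin ((ℓ + 1) * p) = α * Real.sin (ℓ * p) → k ∈ K) :
    {p : ℝ | p ∈ Set.Ioo 0 Real.pi ∧ Real.sin (ℓ * p) ≠ 0 ∧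
        Real.sin ((ℓ + 1) * p) = α * Real.sin (ℓ * p)}.ncard = K.card := by
  have hℓ' : (0 : ℝ) < ℓ := by exact_mod_cast hℓ
  have hpi := Real.pi_pos
  have hne : ∀ (k : ℕ) (p : ℝ), k * Real.pi < ℓ * p → ℓ * p < (k + 1) * Real.pi →
      Real.sin (ℓ * p) ≠ 0 := by
    intro k p h1 h2 h0
    have := qm_pos ℓ k p h1 h2
    simp [h0] at this
  choose! c hc1 hc2 hc3 using hex
  have hS : {p : ℝ | p ∈ Set.Ioo 0 Real.pi ∧ Real.sin (ℓ * p) ≠ 0 ∧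
        Real.sin ((ℓ + 1) * p) = α * Real.sin (ℓ * p)} = c '' (K : Set ℕ) := by
    ext p
    constructor
    · rintro ⟨⟨hp0, hp1⟩, hs, he⟩
      have hnn : 0 ≤ ℓ * p / Real.pi := by positivity
      have f1 := Nat.floor_le hnn
      have f2 := Nat.lt_floor_add_one (ℓ * p / Real.pi)
      set k := ⌊ℓ * p / Real.pi⌋₊
      rw [le_div_iff₀ hpi] at f1
      rw [div_lt_iff₀ hpi] at f2
      have f1' : k * Real.pi < ℓ * p := by
        refine lt_of_le_of_ne f1 fun h => hs ?_
        rw [← h, Real.sin_nat_mul_pi]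
      have hkl : k < ℓ := by
        have : (k : ℝ) < ℓ := by
          by_contra hh
          nlinarith
        exact_mod_cast this
      have hkK := hno k hkl p f1' f2 he
      refine ⟨k, hkK, ?_⟩
      apply (qm_anti ℓ k hkl).injOn
      · exact ⟨by rw [div_lt_iff₀ hℓ', mul_comm (c k)]; exact hc1 k hkK,
          by rw [lt_div_iff₀ hℓ', mul_comm (c k)]; exact hc2 k hkK⟩
      · exact ⟨by rw [div_lt_iff₀ hℓ', mul_comm p]; exact f1',
          by rw [lt_div_iff₀ hℓ', mul_comm p]; exact f2⟩
      · simp only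
        rw [he, hc3 k hkK, mul_div_cancel_right₀ _ hs,
          mul_div_cancel_right₀ _ (hne k _ (hc1 k hkK) (hc2 k hkK))]
    · rintro ⟨k, hk, rfl⟩
      have hk : k ∈ K := hk
      exact ⟨qm_bound ℓ k (hK k hk) _ (hc1 k hk) (hc2 k hk),
        hne k _ (hc1 k hk) (hc2 k hk), hc3 k hk⟩
  rw [hS, Set.ncard_image_of_injOn, Set.ncard_coe_finset]
  intro i hi j hj hij
  have hi : i ∈ K := hi
  have hj : j ∈ K := hj
  have a1 := hc1 i hi
  have a2 := hc2 i hi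
  have b1 := hc1 j hj
  have b2 := hc2 j hj
  rw [hij] at a1 a2
  have l1 : (i : ℝ) < j + 1 := lt_of_mul_lt_mul_right (a1.trans b2) hpi.le
  have l2 : (j : ℝ) < i + 1 := lt_of_mul_lt_mul_right (b1.trans a2) hpi.le
  have l1' : i < j + 1 := by exact_mod_cast l1
  have l2' : j < i + 1 := by exact_mod_cast l2
  omega

/-- Existence from a left point. -/
lemma qm_ivt (ℓ k : ℕ) (hk : k < ℓ) (α : ℝ) (hα : 0 ≤ α) (a : ℝ)
    (ha : k * Real.pi ≤ ℓ * a) (hab : a ≤ (k + 1) * Real.pi / (ℓ + 1))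
    (hf : 0 < (-1 : ℝ) ^ k * (Real.sin ((ℓ + 1) * a) - α * Real.sin (ℓ * a))) :
    ∃ p : ℝ, k * Real.pi < ℓ * p ∧ ℓ * p < (k + 1) * Real.pi ∧
      Real.sin ((ℓ + 1) * p) = α * Real.sin (ℓ * p) := by
  have hℓ : (0 : ℝ) < ℓ := by exact_mod_cast (by omega : 0 < ℓ)
  have hpi := Real.pi_pos
  have hk' : (k : ℝ) < ℓ := by exact_mod_cast hk
  have hℓ1 : (0 : ℝ) < ℓ + 1 := by positivity
  set b := (k + 1) * Real.pi / ((ℓ : ℝ) + 1) with hb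
  have hbe : ((ℓ : ℝ) + 1) * b = (k + 1) * Real.pi := by rw [hb]; field_simp
  have hb0 : 0 < b := by positivity
  have hb1 : k * Real.pi < ℓ * b := by
    have : b < Real.pi := by
      rw [hb, div_lt_iff₀ hℓ1]; nlinarith
    linarith
  have hb2 : ℓ * b < (k + 1) * Real.pi := by linarith
  have hfb : (-1 : ℝ) ^ k * (Real.sin ((ℓ + 1) * b) - α * Real.sin (ℓ * b)) ≤ 0 := by
    have h0 : Real.sin (((ℓ : ℝ) + 1) * b) = 0 := by
      rw [hbe]
      exact_mod_cast Real.sin_nat_mul_pi (k + 1)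
    rw [h0]
    have := mul_nonneg hα (qm_pos ℓ k b hb1 hb2).le
    linarith
  have hcont : ContinuousOn (fun p : ℝ => (-1 : ℝ) ^ k *
      (Real.sin ((ℓ + 1) * p) - α * Real.sin (ℓ * p))) (Set.Icc a b) := by fun_prop
  obtain ⟨p, ⟨hp1, hp2⟩, hp⟩ := intermediate_value_Icc' hab hcont ⟨hfb, hf.le⟩
  simp only at hp
  have hne : p ≠ a := by rintro rfl; linarith
  have hlt : a < p := lt_of_le_of_ne hp1 hne.symm
  refine ⟨p, ?_, ?_, ?_⟩
  · exact ha.trans_lt (mul_lt_mul_of_pos_left hlt hℓ)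
  · exact (mul_le_mul_of_nonneg_left hp2 hℓ.le).trans_lt hb2
  · have : (-1 : ℝ) ^ k ≠ 0 := pow_ne_zero _ (by norm_num)
    rcases mul_eq_zero.mp hp with h | h
    · exact absurd h this
    · linarith

lemma qm_ex_pos (ℓ k : ℕ) (hk0 : 1 ≤ k) (hk : k < ℓ) (α : ℝ) (hα : 0 ≤ α) :
    ∃ p : ℝ, k * Real.pi < ℓ * p ∧ ℓ * p < (k + 1) * Real.pi ∧
      Real.sin ((ℓ + 1) * p) = α * Real.sin (ℓ * p) := by
  have hℓ : (0 : ℝ) < ℓ := by exact_mod_cast (by omega : 0 < ℓ)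
  have hpi := Real.pi_pos
  have hk' : (k : ℝ) < ℓ := by exact_mod_cast hk
  have hk0' : (0 : ℝ) < k := by exact_mod_cast hk0
  have e : (ℓ : ℝ) * (k * Real.pi / ℓ) = k * Real.pi := by field_simp
  apply qm_ivt ℓ k hk α hα (k * Real.pi / ℓ) e.ge
  · rw [div_le_div_iff₀ hℓ (by positivity)]
    nlinarith
  · have e' : ((ℓ : ℝ) + 1) * (k * Real.pi / ℓ) = k * Real.pi / ℓ + k * Real.pi := by
      rw [add_mul, e]; ring
    rw [e', e, Real.sin_nat_mul_pi, mul_zero, sub_zero, qm_sign, add_sub_cancel_right]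
    apply Real.sin_pos_of_pos_of_lt_pi (by positivity)
    rw [div_lt_iff₀ hℓ]; nlinarith

lemma qm_ex_zero (ℓ : ℕ) (hℓ1 : 1 ≤ ℓ) (α : ℝ) (hα : 0 ≤ α) (hlt : α < ((ℓ : ℝ) + 1) / ℓ) :
    ∃ p : ℝ, (0 : ℕ) * Real.pi < ℓ * p ∧ ℓ * p < ((0 : ℕ) + 1) * Real.pi ∧
      Real.sin ((ℓ + 1) * p) = α * Real.sin (ℓ * p) := by
  have hℓ : (0 : ℝ) < ℓ := by exact_mod_cast hℓ1
  have hpi := Real.pi_pos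
  rw [lt_div_iff₀ hℓ] at hlt
  have hd : HasDerivAt (fun p : ℝ => Real.sin ((ℓ + 1) * p) - α * Real.sin (ℓ * p))
      (Real.cos ((ℓ + 1) * 0) * ((ℓ + 1) * 1) - α * (Real.cos (ℓ * 0) * (ℓ * 1))) 0 :=
    (((hasDerivAt_id (0 : ℝ)).const_mul ((ℓ : ℝ) + 1)).sin).sub
      ((((hasDerivAt_id (0 : ℝ)).const_mul (ℓ : ℝ)).sin).const_mul α)
  have hs := (hasDerivAt_iff_tendsto_slope_zero.mp hd).mono_left
    (nhdsWithin_mono (0 : ℝ) (s := Set.Ioi 0) (fun x hx => ne_of_gt hx))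
  have hpos : 0 < (Real.cos ((ℓ + 1) * 0) * ((ℓ + 1) * 1) - α * (Real.cos (ℓ * 0) * (ℓ * 1))) := by
    simp; linarith
  have h1 := hs.eventually (lt_mem_nhds hpos)
  have hb : 0 < Real.pi / ((ℓ : ℝ) + 1) := by positivity
  have h2 : ∀ᶠ x : ℝ in nhdsWithin 0 (Set.Ioi 0), x ∈ Set.Ioo 0 (Real.pi / ((ℓ : ℝ) + 1)) :=
    Ioo_mem_nhdsGT hb
  obtain ⟨a, ha1, ha2, ha3⟩ := (h1.and h2).exists
  apply qm_ivt ℓ 0 (by omega) α hα a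
  · simp; positivity
  · simpa using ha3.le
  · simp only [zero_add, mul_zero, Real.sin_zero, sub_zero, smul_eq_mul] at ha1
    have := (pos_iff_pos_of_mul_pos ha1).mp (inv_pos.mpr ha2)
    simpa using this

lemma qm_no_zero (ℓ : ℕ) (hℓ1 : 1 ≤ ℓ) (α : ℝ) (hge : ((ℓ : ℝ) + 1) / ℓ ≤ α) (p : ℝ)
    (h1 : 0 < ℓ * p) (h2 : ℓ * p < Real.pi)
    (he : Real.sin ((ℓ + 1) * p) = α * Real.sin (ℓ * p)) : False := by
  have hℓ : (0 : ℝ) < ℓ := by exact_mod_cast hℓ1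
  have hℓ' : (1 : ℝ) ≤ ℓ := by exact_mod_cast hℓ1
  have hp : 0 < p := pos_of_mul_pos_right h1 hℓ.le
  have hs := Real.sin_pos_of_pos_of_lt_pi h1 h2
  rw [div_le_iff₀ hℓ] at hge
  have hge' : ((ℓ : ℝ) + 1) * Real.sin (ℓ * p) ≤ ℓ * Real.sin ((ℓ + 1) * p) := by
    rw [he]; nlinarith
  rcases le_or_gt (((ℓ : ℝ) + 1) * p) Real.pi with h | h
  · have m0 : (0 : ℝ) ∈ Set.Icc 0 Real.pi := ⟨le_rfl, Real.pi_pos.le⟩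
    have m1 : ((ℓ : ℝ) + 1) * p ∈ Set.Icc 0 Real.pi := ⟨by positivity, h⟩
    have hne : (0 : ℝ) ≠ ((ℓ : ℝ) + 1) * p := by positivity
    have ca : 0 < 1 / ((ℓ : ℝ) + 1) := by positivity
    have cb : 0 < (ℓ : ℝ) / ((ℓ : ℝ) + 1) := by positivity
    have cs : 1 / ((ℓ : ℝ) + 1) + (ℓ : ℝ) / ((ℓ : ℝ) + 1) = 1 := by field_simp; ring
    have hc := strictConcaveOn_sin_Icc.2 m0 m1 hne ca cb cs
    simp only [smul_eq_mul, Real.sin_zero, mul_zero, zero_add] at hc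
    have e : (ℓ : ℝ) / (ℓ + 1) * ((ℓ + 1) * p) = ℓ * p := by field_simp
    rw [e, div_mul_eq_mul_div, div_lt_iff₀ (by positivity)] at hc
    linarith
  · have : Real.sin (((ℓ : ℝ) + 1) * p) ≤ 0 := by
      have h3 : 0 ≤ Real.sin (((ℓ : ℝ) + 1) * p - Real.pi) :=
        Real.sin_nonneg_of_nonneg_of_le_pi (by linarith) (by nlinarith)
      rw [Real.sin_sub_pi] at h3
      linarith
    nlinarith

theorem quasimomenta_count_solutions (ℓ : ℕ) (hℓ : 1 ≤ ℓ) (α : ℝ) :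
    (0 ≤ α → α < ((ℓ : ℝ) + 1) / ℓ →
      {p : ℝ | p ∈ Set.Ioo 0 Real.pi ∧ Real.sin (ℓ * p) ≠ 0 ∧
        Real.sin ((ℓ + 1) * p) = α * Real.sin (ℓ * p)}.ncard = ℓ) ∧
    (((ℓ : ℝ) + 1) / ℓ ≤ α →
      {p : ℝ | p ∈ Set.Ioo 0 Real.pi ∧ Real.sin (ℓ * p) ≠ 0 ∧
        Real.sin ((ℓ + 1) * p) = α * Real.sin (ℓ * p)}.ncard = ℓ - 1) := by
  constructor
  · intro h0 hlt
    rw [qm_count ℓ hℓ α (Finset.range ℓ), Finset.card_range]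
    · intro k hk; exact Finset.mem_range.mp hk
    · intro k hk
      rcases Nat.eq_zero_or_pos k with rfl | hk0
      · exact qm_ex_zero ℓ hℓ α h0 hlt
      · exact qm_ex_pos ℓ k hk0 (Finset.mem_range.mp hk) α h0
    · intro k hk _ _ _ _; exact Finset.mem_range.mpr hk
  · intro hge
    have h0 : 0 ≤ α := le_trans (by positivity) hge
    rw [qm_count ℓ hℓ α (Finset.Ico 1 ℓ), Nat.card_Ico]
    · intro k hk; exact (Finset.mem_Ico.mp hk).2
    · intro k hk
      have := Finset.mem_Ico.mp hk
      exact qm_ex_pos ℓ k this.1 this.2 α h0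
    · intro k hk p h1 h2 he
      rcases Nat.eq_zero_or_pos k with rfl | hk0
      · exact (qm_no_zero ℓ hℓ α hge p (by simpa using h1) (by simpa using h2) he).elim
      · exact Finset.mem_Ico.mpr ⟨hk0, hk⟩
end

section
/- There exists a constant c > 0 such that for every integer ℓ ≥ 2 and every real α ≥ 0, the difference between the largest and the second largest eigenvalue of A_ℓ(α) is at least c·(1 + α)/ℓ². -/
/-- The adjacency matrix of the path graph on vertices `1, …, ℓ`
(indexed here by `Fin ℓ`, vertex `j+1` for index `j`) with a self-loop of
weight `α` at the endpoint vertex `ℓ`. -/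
def pathMatrixLoop (ℓ : ℕ) (α : ℝ) : Matrix (Fin ℓ) (Fin ℓ) ℝ :=
  Matrix.of fun i j =>
    (if (i : ℕ) + 1 = (j : ℕ) ∨ (j : ℕ) + 1 = (i : ℕ) then (1 : ℝ) else 0) +
    (if (i : ℕ) = ℓ - 1 ∧ (j : ℕ) = ℓ - 1 then α else 0)

/-- The largest element of a finite family of reals (e.g. the largest eigenvalue). -/
noncomputable def maxEig {n : ℕ} (e : Fin n → ℝ) : ℝ := ⨆ i, e i

/-- The second largest element (with multiplicity) of a finite family of reals:
it is the smallest, over choices of a discarded index `i`, of the largest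
remaining element. For `n ≥ 2` this equals the second entry of the family
sorted in decreasing order. -/
noncomputable def sndEig {n : ℕ} (e : Fin n → ℝ) : ℝ :=
  ⨅ i : Fin n, ⨆ j : {j : Fin n // j ≠ i}, e j

lemma pml_mulVec (ℓ : ℕ) (α : ℝ) (f : ℕ → ℝ) (h0 : f 0 = 0) (i : Fin ℓ) :
    (∑ j, pathMatrixLoop ℓ α i j * f (j + 1)) =
      f i + (if (i : ℕ) + 1 < ℓ then f (i + 2) else α * f (i + 1)) := by
  have hi := i.2
  have h1 : ∀ j : Fin ℓ, pathMatrixLoop ℓ α i j * f (j + 1) =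
      (fun m : ℕ => (if m = (i : ℕ) + 1 then f (m + 1) else 0) +
        (if m + 1 = (i : ℕ) then f (m + 1) else 0) +
        (if (i : ℕ) = ℓ - 1 ∧ m = ℓ - 1 then α * f (m + 1) else 0)) j := by
    intro j
    simp only [pathMatrixLoop, Matrix.of_apply]
    split_ifs <;> first | omega | ring | skip
  rw [Finset.sum_congr rfl (fun j _ => h1 j),
    Fin.sum_univ_eq_sum_range (fun m : ℕ => (if m = (i : ℕ) + 1 then f (m + 1) else 0) +
        (if m + 1 = (i : ℕ) then f (m + 1) else 0) +
        (if (i : ℕ) = ℓ - 1 ∧ m = ℓ - 1 then α * f (m + 1) else 0)),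
    Finset.sum_add_distrib, Finset.sum_add_distrib]
  have e1 : (∑ m ∈ Finset.range ℓ, if m = (i : ℕ) + 1 then f (m + 1) else 0) =
      if (i : ℕ) + 1 < ℓ then f (i + 2) else 0 := by
    rw [Finset.sum_ite_eq']; simp
  have e2 : (∑ m ∈ Finset.range ℓ, if m + 1 = (i : ℕ) then f (m + 1) else 0) = f i := by
    rcases Nat.eq_zero_or_pos (i : ℕ) with h | h
    · rw [h, h0]; simp
    · rw [Finset.sum_eq_single_of_mem ((i : ℕ) - 1) (by simp; omega)]
      · rw [if_pos (by omega)]; congr 1; omega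
      · intro b _ hb; rw [if_neg (by omega)]
  have e3 : (∑ m ∈ Finset.range ℓ, if (i : ℕ) = ℓ - 1 ∧ m = ℓ - 1 then α * f (m + 1) else 0) =
      if (i : ℕ) + 1 < ℓ then 0 else α * f (i + 1) := by
    split_ifs with h
    · apply Finset.sum_eq_zero
      intro m _; rw [if_neg (by omega)]
    · rw [Finset.sum_eq_single_of_mem (i : ℕ) (by simp)]
      · rw [if_pos (by omega)]
      · intro b _ hb; rw [if_neg (by omega)]
  rw [e1, e2, e3]
  split_ifs <;> ring

section spec
open Matrix
variable {n : ℕ} {A : Matrix (Fin n) (Fin n) ℝ}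

lemma pml_max (hH : A.IsHermitian) (lam : ℝ) (u : Fin n → ℝ)
    (hu : 0 < u ⬝ᵥ u) (h : lam * (u ⬝ᵥ u) ≤ u ⬝ᵥ (A *ᵥ u)) : lam ≤ maxEig hH.eigenvalues := by
  have hb : ∀ i, hH.eigenvalues i ≤ maxEig hH.eigenvalues := fun i =>
    le_ciSup (Set.finite_range _).bddAbove i
  set M := maxEig hH.eigenvalues
  let b := hH.eigenvectorBasis
  have key : ∀ y : Fin n → ℝ, ∑ i, (u ⬝ᵥ ⇑(b i)) * (⇑(b i) ⬝ᵥ y) = u ⬝ᵥ y := by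
    intro y
    have := b.sum_inner_mul_inner (WithLp.toLp 2 u) (WithLp.toLp 2 y)
    simp only [EuclideanSpace.inner_eq_star_dotProduct, star_trivial] at this
    rw [dotProduct_comm u y, ← this]
    refine Finset.sum_congr rfl fun i _ => ?_
    rw [dotProduct_comm u, dotProduct_comm _ y]
  have hT : Aᵀ = A := by
    have h9 : A.IsSymm := by simpa using hH
    exact h9
  have h2 : ∀ i, ⇑(b i) ⬝ᵥ (A *ᵥ u) = hH.eigenvalues i * (⇑(b i) ⬝ᵥ u) := by
    intro i
    rw [dotProduct_mulVec, ← mulVec_transpose, hT]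
    have := hH.mulVec_eigenvectorBasis i
    change A *ᵥ ⇑(b i) = _ at this
    rw [this, smul_dotProduct, smul_eq_mul]
  have h3 : u ⬝ᵥ (A *ᵥ u) ≤ M * (u ⬝ᵥ u) := by
    rw [← key, ← key u, Finset.mul_sum]
    refine Finset.sum_le_sum fun i _ => ?_
    rw [h2, dotProduct_comm u]
    nlinarith [hb i, mul_self_nonneg (⇑(b i) ⬝ᵥ u)]
  by_contra hc
  push Not at hc
  nlinarith

lemma pml_snd (hn : 2 ≤ n) (hH : A.IsHermitian) (mu : ℝ) (k : Fin n)
    (h : ∀ x : Fin n → ℝ, x k = 0 → x ⬝ᵥ (A *ᵥ x) ≤ mu * (x ⬝ᵥ x)) :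
    sndEig hH.eigenvalues ≤ mu := by
  let b := hH.eigenvectorBasis
  have hA : ∀ i, A *ᵥ ⇑(b i) = hH.eigenvalues i • ⇑(b i) := fun i =>
    hH.mulVec_eigenvectorBasis i
  have ho : ∀ i j, ⇑(b i) ⬝ᵥ ⇑(b j) = if i = j then (1 : ℝ) else 0 := by
    intro i j
    have := orthonormal_iff_ite.1 b.orthonormal i j
    rw [EuclideanSpace.inner_eq_star_dotProduct, star_trivial, dotProduct_comm] at this
    exact this
  have hpair : ∀ i j, i ≠ j → hH.eigenvalues j ≤ hH.eigenvalues i → hH.eigenvalues j ≤ mu := by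
    intro i j hij hle
    by_contra hc
    push Not at hc
    have hgen : ∀ p q : ℝ, p * b i k + q * b j k = 0 → p ^ 2 + q ^ 2 ≤ 0 := by
      intro p q hpq
      have := h (p • ⇑(b i) + q • ⇑(b j)) (by simpa using hpq)
      simp only [mulVec_add, mulVec_smul, hA, dotProduct_add, add_dotProduct, smul_dotProduct,
        dotProduct_smul, smul_eq_mul, ho, if_neg hij, if_neg hij.symm, if_true] at this
      by_contra hpos
      push Not at hpos
      nlinarith [sq_nonneg p, sq_nonneg q]
    have h1 := hgen (b j k) (-b i k) (by ring)
    have h2 : b i k = 0 := by nlinarith [sq_nonneg (b j k), sq_nonneg (b i k)]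
    have h3 := hgen 1 0 (by rw [h2]; ring)
    norm_num at h3
  have : Nonempty (Fin n) := ⟨k⟩
  obtain ⟨i, hi⟩ := Finite.exists_max hH.eigenvalues
  have : sndEig hH.eigenvalues ≤ ⨆ j : {j : Fin n // j ≠ i}, hH.eigenvalues j :=
    ciInf_le (Set.finite_range _).bddBelow i
  refine this.trans ?_
  have : Nontrivial (Fin n) := Fin.nontrivial_iff_two_le.2 hn
  obtain ⟨j, hj⟩ := exists_ne i
  have : Nonempty {j : Fin n // j ≠ i} := ⟨⟨j, hj⟩⟩
  exact ciSup_le fun j => hpair i j j.2.symm (hi j)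

lemma pml_form (hT : ∀ i j, A i j = A j i) (k : Fin n) (hA : ∀ i j, i ≠ k → j ≠ k → 0 ≤ A i j)
    (mu : ℝ) (v : Fin n → ℝ) (hvk : v k = 0) (hv : ∀ i, i ≠ k → 0 < v i)
    (hAv : ∀ i, i ≠ k → ∑ j, A i j * v j ≤ mu * v i)
    (x : Fin n → ℝ) (hx : x k = 0) : x ⬝ᵥ (A *ᵥ x) ≤ mu * (x ⬝ᵥ x) := by
  have h1 : x ⬝ᵥ (A *ᵥ x) = ∑ i, ∑ j, A i j * (x i * x j) := by
    simp only [dotProduct, mulVec, Finset.mul_sum]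
    refine Finset.sum_congr rfl fun i _ => Finset.sum_congr rfl fun j _ => by ring
  let g : Fin n → Fin n → ℝ := fun i j => A i j * (x i ^ 2 / v i * v j)
  have h2 : ∀ i j, 2 * (A i j * (x i * x j)) ≤ g i j + g j i := by
    intro i j
    by_cases hi : i = k
    · subst hi; simp [g, hx, hvk]
    by_cases hj : j = k
    · subst hj; simp [g, hx, hvk]
    have hvi := hv i hi
    have hvj := hv j hj
    have : 2 * (x i * x j) ≤ x i ^ 2 / v i * v j + x j ^ 2 / v j * v i := by
      have : x i ^ 2 / v i * v j + x j ^ 2 / v j * v i - 2 * (x i * x j) =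
        (x i * v j - x j * v i) ^ 2 / (v i * v j) := by field_simp; ring
      have : 0 ≤ (x i * v j - x j * v i) ^ 2 / (v i * v j) := by positivity
      linarith
    simp only [g]
    rw [hT j i]
    nlinarith [hA i j hi hj]
  have h3 : 2 * (x ⬝ᵥ (A *ᵥ x)) ≤ 2 * ∑ i, ∑ j, g i j := by
    have : ∑ i, ∑ j, (g i j + g j i) = 2 * ∑ i, ∑ j, g i j := by
      simp only [Finset.sum_add_distrib]
      rw [Finset.sum_comm (f := fun i j => g j i)]; ring
    rw [← this, h1, Finset.mul_sum]
    refine Finset.sum_le_sum fun i _ => ?_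
    rw [Finset.mul_sum]
    exact Finset.sum_le_sum fun j _ => h2 i j
  have h4 : ∑ i, ∑ j, g i j ≤ mu * (x ⬝ᵥ x) := by
    simp only [dotProduct, Finset.mul_sum]
    refine Finset.sum_le_sum fun i _ => ?_
    by_cases hi : i = k
    · subst hi; simp [g, hx]
    have hvi := hv i hi
    have : ∑ j, g i j = x i ^ 2 / v i * ∑ j, A i j * v j := by
      rw [Finset.mul_sum]; refine Finset.sum_congr rfl fun j _ => by simp only [g]; ring
    rw [this]
    calc x i ^ 2 / v i * ∑ j, A i j * v j ≤ x i ^ 2 / v i * (mu * v i) :=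
          mul_le_mul_of_nonneg_left (hAv i hi) (by positivity)
      _ = mu * (x i * x i) := by field_simp
  linarith

end spec

lemma pml_rec (b t : ℝ) : Real.sin (t - b) + Real.sin (t + b) = 2 * Real.cos b * Real.sin t := by
  rw [Real.sin_sub, Real.sin_add]; ring

lemma pml_symm (ℓ : ℕ) (α : ℝ) (i j : Fin ℓ) :
    pathMatrixLoop ℓ α i j = pathMatrixLoop ℓ α j i := by
  simp only [pathMatrixLoop, Matrix.of_apply]
  congr 1
  · simp only [or_comm]
  · simp only [and_comm]

/-- lower bound for the top eigenvalue -/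
lemma pml_lower (ℓ : ℕ) (hl : 2 ≤ ℓ) (α a : ℝ) (ha : 0 < a) (hal : ℓ * a < Real.pi)
    (hend : Real.sin ((ℓ + 1) * a) ≤ α * Real.sin (ℓ * a))
    (hH : (pathMatrixLoop ℓ α).IsHermitian) : 2 * Real.cos a ≤ maxEig hH.eigenvalues := by
  let f : ℕ → ℝ := fun m => Real.sin (m * a)
  have hpos : ∀ i : Fin ℓ, 0 < f (i + 1) := by
    intro i
    have : ((i + 1 : ℕ) : ℝ) ≤ ℓ := by exact_mod_cast i.2
    exact Real.sin_pos_of_pos_of_lt_pi (by positivity) (by nlinarith)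
  have hr : ∀ m : ℕ, f m + f (m + 2) = 2 * Real.cos a * f (m + 1) := by
    intro m
    have := pml_rec a ((m + 1) * a)
    simp only [f]; push_cast
    rw [← this]; congr 2 <;> ring
  apply pml_max hH (2 * Real.cos a) (fun i => f (i + 1))
  · apply Finset.sum_pos
    · intro i _; exact mul_pos (hpos i) (hpos i)
    · exact ⟨⟨0, by omega⟩, Finset.mem_univ _⟩
  · simp only [dotProduct, Matrix.mulVec, Finset.mul_sum (a := 2 * Real.cos a)]
    refine Finset.sum_le_sum fun i _ => ?_
    rw [pml_mulVec ℓ α f (by simp [f])]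
    have : 2 * Real.cos a * f (i + 1) ≤
        f i + (if (i : ℕ) + 1 < ℓ then f (i + 2) else α * f (i + 1)) := by
      rw [← hr]
      split_ifs with h
      · exact le_rfl
      · have e : (i : ℕ) + 1 = ℓ := by have := i.2; omega
        have e2 : (i : ℕ) + 2 = ℓ + 1 := by omega
        rw [e, e2]
        simp only [f]; push_cast
        linarith
    nlinarith [hpos i]

/-- upper bound for the second eigenvalue -/
lemma pml_upper (ℓ : ℕ) (hl : 2 ≤ ℓ) (α b : ℝ) (hα : 0 ≤ α) (k : ℕ) (hk : 1 ≤ k) (hkl : k ≤ ℓ)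
    (hor : α ≤ 1 ∨ k = ℓ)
    (hb : 0 < b) (hkb : k * b ≤ Real.pi) (hmb : (2 * ((ℓ : ℝ) - k) + 1) * b ≤ Real.pi)
    (hH : (pathMatrixLoop ℓ α).IsHermitian) : sndEig hH.eigenvalues ≤ 2 * Real.cos b := by
  let f : ℕ → ℝ := fun m => if m < k then Real.sin (m * b) else Real.sin (((m : ℝ) - k) * b)
  have f0 : f 0 = 0 := by simp only [f]; rw [if_pos (by omega)]; simp
  have fk : f k = 0 := by simp only [f]; rw [if_neg (by omega)]; simp
  have hklR : (k : ℝ) ≤ ℓ := by exact_mod_cast hkl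
  have hbpi : b ≤ Real.pi := by nlinarith
  let K : Fin ℓ := ⟨k - 1, by omega⟩
  have hK : ∀ i : Fin ℓ, i ≠ K → (i : ℕ) + 1 ≠ k := by
    intro i hi h; apply hi; ext; simp only [K]; omega
  have hpos : ∀ i : Fin ℓ, i ≠ K → 0 < f (i + 1) := by
    intro i hi
    have hne := hK i hi
    simp only [f]
    split_ifs with h
    · have : ((i + 1 : ℕ) : ℝ) + 1 ≤ k := by exact_mod_cast h
      exact Real.sin_pos_of_pos_of_lt_pi (by positivity) (by nlinarith)
    · have h1 : (k : ℝ) + 1 ≤ ((i + 1 : ℕ) : ℝ) := by exact_mod_cast (by omega)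
      have h2 : ((i + 1 : ℕ) : ℝ) ≤ ℓ := by exact_mod_cast i.2
      exact Real.sin_pos_of_pos_of_lt_pi (by nlinarith) (by nlinarith)
  apply pml_snd hl hH _ K
  apply pml_form (pml_symm ℓ α) K _ _ (fun i => f (i + 1))
  · simp only [K]; rw [Nat.sub_add_cancel hk, fk]
  · exact hpos
  · intro i hi
    rw [pml_mulVec ℓ α f f0]
    have hne := hK i hi
    have hil := i.2
    by_cases h : (i : ℕ) + 1 < k
    · rw [if_pos (by omega)]
      have e1 : f i = Real.sin (i * b) := by simp only [f]; rw [if_pos (by omega)]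
      have e2 : f (i + 1) = Real.sin ((i + 1) * b) := by
        simp only [f]; rw [if_pos (by omega)]; push_cast; rfl
      have e3 : f (i + 2) ≤ Real.sin ((i + 2) * b) := by
        by_cases h' : (i : ℕ) + 2 < k
        · simp only [f]; rw [if_pos h']; push_cast; exact le_rfl
        · have h2 : (i : ℕ) + 2 = k := by omega
          have h3 : (i : ℝ) + 2 = k := by exact_mod_cast h2
          rw [h2, fk, h3]
          exact Real.sin_nonneg_of_nonneg_of_le_pi (by positivity) hkb
      have := pml_rec b ((i + 1) * b)
      rw [show ((i : ℝ) + 1) * b - b = i * b by ring,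
        show ((i : ℝ) + 1) * b + b = (i + 2) * b by ring] at this
      rw [e1, e2]; linarith
    · have e1 : f i = Real.sin (((i : ℝ) - k) * b) := by simp only [f]; rw [if_neg (by omega)]
      have e2 : f (i + 1) = Real.sin (((i : ℝ) + 1 - k) * b) := by
        simp only [f]; rw [if_neg (by omega)]; push_cast; rfl
      have e3 : f (i + 2) = Real.sin (((i : ℝ) + 2 - k) * b) := by
        simp only [f]; rw [if_neg (by omega)]; push_cast; rfl
      have hrec := pml_rec b (((i : ℝ) + 1 - k) * b)
      rw [show ((i : ℝ) + 1 - k) * b - b = (i - k) * b by ring,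
        show ((i : ℝ) + 1 - k) * b + b = (i + 2 - k) * b by ring, ← e1, ← e2, ← e3] at hrec
      rw [← hrec]
      split_ifs with hlt
      · exact le_rfl
      · have hα1 : α ≤ 1 := by rcases hor with h | h; exact h; omega
        have hp := hpos i hi
        have e : (i : ℕ) + 1 = ℓ := by omega
        have eR : (i : ℝ) + 1 = ℓ := by exact_mod_cast e
        have : f (i + 1) ≤ f (i + 2) := by
          have hs := Real.sin_sub_sin (((i : ℝ) + 2 - k) * b) (((i : ℝ) + 1 - k) * b)
          rw [← e2, ← e3] at hs
          have hc : 0 ≤ Real.cos ((((i : ℝ) + 2 - k) * b + ((i : ℝ) + 1 - k) * b) / 2) := by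
            apply Real.cos_nonneg_of_mem_Icc
            have : (((i : ℝ) + 2 - k) * b + ((i : ℝ) + 1 - k) * b) / 2
              = (2 * ((ℓ : ℝ) - k) + 1) * b / 2 := by rw [← eR]; ring
            rw [this]
            constructor
            · have : 0 ≤ (2 * ((ℓ : ℝ) - k) + 1) * b / 2 := by
                have : 0 ≤ (ℓ : ℝ) - k := by linarith
                positivity
              linarith [Real.pi_pos]
            · linarith
          have hsn : 0 ≤ Real.sin ((((i : ℝ) + 2 - k) * b - ((i : ℝ) + 1 - k) * b) / 2) := by
            apply Real.sin_nonneg_of_nonneg_of_le_pi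
            · ring_nf; linarith
            · ring_nf; linarith
          have := mul_nonneg hsn hc
          linarith
        nlinarith
  · intro i j _ _
    simp only [pathMatrixLoop, Matrix.of_apply]
    split_ifs <;> linarith

lemma pml_cos (a b : ℝ) (ha : 0 ≤ a) (hab : a ≤ b) (hb : b ≤ Real.pi / 2) :
    4 / Real.pi ^ 2 * (b ^ 2 - a ^ 2) ≤ 2 * Real.cos a - 2 * Real.cos b := by
  have h := Real.cos_sub_cos a b
  rw [show (a - b) / 2 = -((b - a) / 2) by ring, Real.sin_neg] at h
  have h1 := Real.mul_le_sin (x := (a + b) / 2) (by linarith) (by linarith)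
  have h2 := Real.mul_le_sin (x := (b - a) / 2) (by linarith) (by linarith)
  have hp := Real.pi_pos
  have h3 : (2 / Real.pi * ((a + b) / 2)) * (2 / Real.pi * ((b - a) / 2)) ≤
      Real.sin ((a + b) / 2) * Real.sin ((b - a) / 2) := by
    apply mul_le_mul h1 h2
    · have : 0 ≤ b - a := by linarith
      positivity
    · have : 0 ≤ a + b := by linarith
      exact le_trans (by positivity) h1
  have h4 : (2 / Real.pi * ((a + b) / 2)) * (2 / Real.pi * ((b - a) / 2)) =
    1 / Real.pi ^ 2 * (b ^ 2 - a ^ 2) := by field_simp; ring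
  have h5 : 4 / Real.pi ^ 2 * (b ^ 2 - a ^ 2) = 4 * (1 / Real.pi ^ 2 * (b ^ 2 - a ^ 2)) := by ring
  rw [h5, ← h4]
  linarith

/-- difference of cosines at reciprocal multiples of pi -/
lemma pml_cos_div (x y : ℝ) (hy : 2 ≤ y) (hxy : y ≤ x) :
    4 * (1 / y ^ 2 - 1 / x ^ 2) ≤
      2 * Real.cos (Real.pi / x) - 2 * Real.cos (Real.pi / y) := by
  have hp := Real.pi_pos
  have hx0 : 0 < x := by linarith
  have h := pml_cos (Real.pi / x) (Real.pi / y) (by positivity)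
    (by gcongr) (by gcongr)
  refine le_trans (le_of_eq ?_) h
  have : x ≠ 0 := by linarith
  field_simp

theorem pathMatrixLoop_spectral_gap :
    ∃ c : ℝ, 0 < c ∧ ∀ ℓ : ℕ, 2 ≤ ℓ → ∀ α : ℝ, 0 ≤ α →
      ∀ hH : (pathMatrixLoop ℓ α).IsHermitian,
        maxEig hH.eigenvalues - sndEig hH.eigenvalues ≥ c * (1 + α) / ℓ ^ 2 := by
  refine ⟨1 / 8, by norm_num, ?_⟩
  intro ℓ hl α hα hH
  have hlR : (2 : ℝ) ≤ ℓ := by exact_mod_cast hl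
  have hl0 : (0 : ℝ) < ℓ := by linarith
  have hp := Real.pi_pos
  rw [ge_iff_le, div_le_iff₀ (by positivity)]
  rcases le_total α 1 with h1 | h1
  · -- small loop
    obtain ⟨k, hk⟩ : ∃ k, k = 2 * ℓ / 3 + 1 := ⟨_, rfl⟩
    have hk2 : 2 ≤ k := by omega
    have hkl : k ≤ ℓ := by omega
    have hm : 2 * ℓ + 1 ≤ 3 * k := by omega
    have hk3 : 3 * k ≤ 2 * ℓ + 3 := by omega
    have hk2R : (2 : ℝ) ≤ k := by exact_mod_cast hk2
    have hklR : (k : ℝ) ≤ ℓ := by exact_mod_cast hkl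
    have hmR : 2 * (ℓ : ℝ) + 1 ≤ 3 * k := by exact_mod_cast hm
    have hk3R : 3 * (k : ℝ) ≤ 2 * ℓ + 3 := by exact_mod_cast hk3
    have hkp : (0 : ℝ) < k := by linarith
    have hU := pml_upper ℓ hl α (Real.pi / k) hα k (by omega) hkl (Or.inl h1) (by positivity)
      (by field_simp; exact le_rfl)
      (by rw [mul_div_assoc', div_le_iff₀ hkp]; nlinarith) hH
    have hL := pml_lower ℓ hl α (Real.pi / (ℓ + 1)) (by positivity)
      (by rw [mul_div_assoc', div_lt_iff₀ (by positivity)]; nlinarith)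
      (by
        rw [mul_div_cancel₀ _ (by positivity), Real.sin_pi]
        apply mul_nonneg hα
        apply Real.sin_nonneg_of_nonneg_of_le_pi (by positivity)
        rw [mul_div_assoc', div_le_iff₀ (by positivity)]; nlinarith) hH
    have hC := pml_cos_div (ℓ + 1) k hk2R (by linarith)
    have hD : 1 / (4 * (ℓ : ℝ) ^ 2) ≤ 4 * (1 / (k : ℝ) ^ 2 - 1 / ((ℓ : ℝ) + 1) ^ 2) := by
      have a1 : 81 / 49 * (1 / ((ℓ : ℝ) + 1) ^ 2) ≤ 1 / (k : ℝ) ^ 2 := by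
        rw [mul_one_div, div_le_div_iff₀ (by positivity) (by positivity)]
        nlinarith
      have a2 : 4 / 9 * (1 / (ℓ : ℝ) ^ 2) ≤ 1 / ((ℓ : ℝ) + 1) ^ 2 := by
        rw [mul_one_div, div_le_div_iff₀ (by positivity) (by positivity)]
        nlinarith
      have a3 : 0 < 1 / (ℓ : ℝ) ^ 2 := by positivity
      have a4 : 1 / (4 * (ℓ : ℝ) ^ 2) = 1 / 4 * (1 / (ℓ : ℝ) ^ 2) := by field_simp
      rw [a4]; linarith
    have hE : 1 / (4 * (ℓ : ℝ) ^ 2) ≤ maxEig hH.eigenvalues - sndEig hH.eigenvalues := by linarith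
    rw [div_le_iff₀ (by positivity)] at hE
    linarith
  · have hU := pml_upper ℓ hl α (Real.pi / ℓ) hα ℓ (by omega) le_rfl (Or.inr rfl) (by positivity)
      (by field_simp; exact le_rfl)
      (by rw [mul_div_assoc', div_le_iff₀ hl0]; nlinarith) hH
    rcases le_total α 5 with h5 | h5
    · have hL := pml_lower ℓ hl α (Real.pi / (2 * ℓ + 1)) (by positivity)
        (by rw [mul_div_assoc', div_lt_iff₀ (by positivity)]; nlinarith)
        (by
          have e : ((ℓ : ℝ) + 1) * (Real.pi / (2 * ℓ + 1)) =
            Real.pi - ℓ * (Real.pi / (2 * ℓ + 1)) := by field_simp; ring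
          rw [e, Real.sin_pi_sub]
          have : 0 ≤ Real.sin (ℓ * (Real.pi / (2 * ℓ + 1))) := by
            apply Real.sin_nonneg_of_nonneg_of_le_pi (by positivity)
            rw [mul_div_assoc', div_le_iff₀ (by positivity)]; nlinarith
          nlinarith) hH
      have hC := pml_cos_div (2 * ℓ + 1) ℓ hlR (by linarith)
      have a1 : 1 / (2 * (ℓ : ℝ) + 1) ^ 2 ≤ 1 / 4 * (1 / (ℓ : ℝ) ^ 2) := by
        rw [mul_one_div, div_le_div_iff₀ (by positivity) (by positivity)]
        nlinarith
      have hE : 3 * (1 / (ℓ : ℝ) ^ 2) ≤ maxEig hH.eigenvalues - sndEig hH.eigenvalues := by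
        linarith
      rw [mul_one_div, div_le_iff₀ (by positivity)] at hE
      linarith
    · have hL : α ≤ maxEig hH.eigenvalues := by
        let i0 : Fin ℓ := ⟨ℓ - 1, by omega⟩
        apply pml_max hH α (Pi.single i0 1)
        · simp
        · simp [pathMatrixLoop, i0]
      have := Real.cos_le_one (Real.pi / ℓ)
      have hg : 1 / 8 * (1 + α) ≤ maxEig hH.eigenvalues - sndEig hH.eigenvalues := by linarith
      have h0 : 0 ≤ maxEig hH.eigenvalues - sndEig hH.eigenvalues := by linarith
      exact hg.trans (le_mul_of_one_le_right h0 (by nlinarith))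
end

section
/- Let d ≥ 1 be an integer and let G be a finite simple graph that is acyclic (a forest) in which every vertex has degree at most d + 1. Then every eigenvalue λ of the adjacency matrix of G satisfies |λ| ≤ 2√d; equivalently, the spectral norm of the adjacency matrix of G is at most 2√d. -/
theorem forest_height {V : Type*} (G : SimpleGraph V) (hG : G.IsAcyclic) :
    ∃ h : V → ℕ, ∀ v, ∃ p, ∀ u, G.Adj v u → h v ≤ h u + 1 ∧ (u ≠ p → h u = h v + 1) := by
  classical
  let r : V → V := fun v => (G.connectedComponentMk v).out
  have hr : ∀ v, G.Reachable (r v) v := fun v =>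
    SimpleGraph.ConnectedComponent.exact (Quot.out_eq (G.connectedComponentMk v))
  have hadj : ∀ v u, G.Adj v u → r u = r v := by
    intro v u h
    have : G.connectedComponentMk u = G.connectedComponentMk v :=
      SimpleGraph.ConnectedComponent.sound h.symm.reachable
    simp only [r, this]
  refine ⟨fun v => G.dist (r v) v, fun v => ?_⟩
  obtain ⟨P, hP, hPl⟩ := (hr v).exists_path_of_dist
  refine ⟨P.penultimate, fun u huv => ?_⟩
  have hru : G.Reachable (r v) u := (hr v).trans huv.reachable
  simp only [hadj v u huv]
  obtain ⟨Q, hQ, hQl⟩ := hru.exists_path_of_dist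
  have key : G.dist (r v) v ≤ G.dist (r v) u + 1 := by
    have := SimpleGraph.dist_le (Q.concat huv.symm)
    rw [SimpleGraph.Walk.length_concat] at this
    omega
  refine ⟨key, fun hne => ?_⟩
  have hu : u ∉ P.support := fun hu => hne (hG.eq_penultimate_of_adj_end hP huv hu)
  have hc : (P.concat huv).IsPath := hP.concat hu huv
  have := hG.path_unique ⟨_, hc⟩ ⟨Q, hQ⟩
  have h2 : P.concat huv = Q := congrArg Subtype.val this
  rw [← hQl, ← h2, SimpleGraph.Walk.length_concat, hPl]

theorem forest_spectral_norm_bound {V : Type*} [Fintype V] [DecidableEq V]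
    (d : ℕ) (hd : 1 ≤ d) (G : SimpleGraph V) [DecidableRel G.Adj]
    (hacyclic : G.IsAcyclic) (hdeg : ∀ v : V, G.degree v ≤ d + 1) :
    ∀ (μ : ℝ) (w : V → ℝ), w ≠ 0 → (G.adjMatrix ℝ).mulVec w = μ • w →
      |μ| ≤ 2 * Real.sqrt d := by
  intro μ w hw heq
  obtain ⟨h, hh⟩ := forest_height G hacyclic
  have hd1 : (1:ℝ) ≤ d := by exact_mod_cast hd
  obtain ⟨s, hs⟩ : ∃ s, s = Real.sqrt d := ⟨_, rfl⟩
  have hs1 : 1 ≤ s := by rw [hs]; exact Real.one_le_sqrt.mpr hd1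
  have hss : s * s = d := by rw [hs]; exact Real.mul_self_sqrt (by linarith)
  rw [← hs]
  have hs0 : 0 < s := by linarith
  obtain ⟨f, hf⟩ : ∃ f : V → ℝ, f = fun v => (s⁻¹) ^ (h v) := ⟨_, rfl⟩
  have hinv1 : s⁻¹ ≤ 1 := inv_le_one_of_one_le₀ hs1
  have hinv0 : 0 < s⁻¹ := inv_pos.mpr hs0
  have hsi : s * s⁻¹ = 1 := mul_inv_cancel₀ hs0.ne'
  have hfpos : ∀ v, 0 < f v := fun v => by rw [hf]; positivity
  have hAf : ∀ v, ∑ u ∈ G.neighborFinset v, f u ≤ 2 * s * f v := by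
    intro v
    obtain ⟨p, hp⟩ := hh v
    have hb : ∀ u ∈ G.neighborFinset v,
        f u ≤ f v * s⁻¹ + (if u = p then (s - s⁻¹) * f v else 0) := by
      intro u hu
      obtain ⟨h1, h2⟩ := hp u (by simpa using hu)
      split_ifs with hup
      · have : (s⁻¹) ^ (h u + 1) ≤ (s⁻¹) ^ (h v) :=
          pow_le_pow_of_le_one hinv0.le hinv1 h1
        have h3 : f u * s⁻¹ ≤ f v := by rw [hf]; simpa [pow_succ] using this
        have h4 : s * (f u * s⁻¹) ≤ s * f v := mul_le_mul_of_nonneg_left h3 hs0.le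
        have h5 : s * (f u * s⁻¹) = f u := by rw [mul_left_comm, hsi, mul_one]
        linarith
      · have := h2 hup
        rw [hf]; simp [this, pow_succ]
    have hnn : 0 ≤ (s - s⁻¹) * f v := mul_nonneg (by linarith) (hfpos v).le
    have hdv : (G.degree v : ℝ) ≤ d + 1 := by exact_mod_cast hdeg v
    have hfs : 0 ≤ f v * s⁻¹ := (mul_pos (hfpos v) hinv0).le
    calc ∑ u ∈ G.neighborFinset v, f u
        ≤ ∑ u ∈ G.neighborFinset v, (f v * s⁻¹ + (if u = p then (s - s⁻¹) * f v else 0)) :=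
          Finset.sum_le_sum hb
      _ ≤ (d + 1) * (f v * s⁻¹) + (s - s⁻¹) * f v := by
          rw [Finset.sum_add_distrib, Finset.sum_const, Finset.sum_ite_eq', nsmul_eq_mul,
            SimpleGraph.card_neighborFinset_eq_degree]
          refine add_le_add (mul_le_mul_of_nonneg_right hdv hfs) ?_
          split_ifs
          · exact le_rfl
          · exact hnn
      _ = 2 * s * f v := by rw [← hss]; linear_combination (s * f v) * hsi
  obtain ⟨x, hx⟩ := Function.ne_iff.mp hw
  obtain ⟨v, -, hv⟩ := Finset.exists_max_image Finset.univ (fun u => |w u| / f u)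
    ⟨x, Finset.mem_univ x⟩
  obtain ⟨M, hM⟩ : ∃ M, M = |w v| / f v := ⟨_, rfl⟩
  have hle : ∀ u, |w u| ≤ M * f u := fun u => by
    have := hv u (Finset.mem_univ u)
    rw [hM]; exact (div_le_iff₀ (hfpos u)).mp this
  have hMv : |w v| = M * f v := by rw [hM, div_mul_cancel₀ _ (hfpos v).ne']
  have hMpos : 0 < M := by
    have h1 : 0 < |w x| := abs_pos.mpr hx
    exact pos_of_mul_pos_left (h1.trans_le (hle x)) (hfpos x).le
  have e := congrFun heq v
  rw [SimpleGraph.adjMatrix_mulVec_apply, Pi.smul_apply, smul_eq_mul] at e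
  have h1 : |μ| * (M * f v) ≤ 2 * s * (M * f v) := by
    calc |μ| * (M * f v) = |∑ u ∈ G.neighborFinset v, w u| := by rw [e, abs_mul, hMv]
      _ ≤ ∑ u ∈ G.neighborFinset v, |w u| := Finset.abs_sum_le_sum_abs _ _
      _ ≤ ∑ u ∈ G.neighborFinset v, M * f u := Finset.sum_le_sum fun u _ => hle u
      _ = M * ∑ u ∈ G.neighborFinset v, f u := by rw [Finset.mul_sum]
      _ ≤ M * (2 * s * f v) := mul_le_mul_of_nonneg_left (hAf v) hMpos.le
      _ = 2 * s * (M * f v) := by ring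
  exact le_of_mul_le_mul_right h1 (mul_pos hMpos (hfpos v))
end

section
/- Let L ≥ 1 be an integer, let d ≥ 0 and γ, x ∈ ℝ, and let M be the (L+1)×(L+1) real symmetric matrix indexed by {0,1,…,L} with M_{j,j+1} = M_{j+1,j} = √d for 0 ≤ j ≤ L−1, M_{0,0} = γ, and all other entries 0. If γ·sinh((L+1)x) = √d·sinh((L+2)x), then the vector v with components v_j = sinh((L+1−j)x) for j = 0,…,L satisfies M·v = 2√d·cosh(x)·v. -/
/-- The adjacency matrix of a path on the `L+1` vertices `0, 1, …, L` with
uniform edge weight `√d` and a self-loop of weight `γ` at the root vertex `0`. -/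
noncomputable def weightedPathMatrix (L : ℕ) (d γ : ℝ) :
    Matrix (Fin (L + 1)) (Fin (L + 1)) ℝ :=
  Matrix.of fun i j =>
    (if (i : ℕ) + 1 = (j : ℕ) ∨ (j : ℕ) + 1 = (i : ℕ) then Real.sqrt d else 0) +
    (if (i : ℕ) = 0 ∧ (j : ℕ) = 0 then γ else 0)

theorem weighted_path_top_eigenvector (L : ℕ) (hL : 1 ≤ L) (d γ x : ℝ) (hd : 0 ≤ d)
    (h : γ * Real.sinh ((L + 1) * x) = Real.sqrt d * Real.sinh ((L + 2) * x)) :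
    (weightedPathMatrix L d γ).mulVec
        (fun j : Fin (L + 1) => Real.sinh (((L : ℝ) + 1 - (j : ℕ)) * x)) =
      (2 * Real.sqrt d * Real.cosh x) •
        fun j : Fin (L + 1) => Real.sinh (((L : ℝ) + 1 - (j : ℕ)) * x) := by
  funext i
  obtain ⟨i, hi⟩ := i
  simp only [Matrix.mulVec, dotProduct, weightedPathMatrix, Matrix.of_apply, Pi.smul_apply,
    smul_eq_mul]
  rw [Fin.sum_univ_eq_sum_range (fun j : ℕ =>
    ((if i + 1 = j ∨ j + 1 = i then Real.sqrt d else 0) +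
      (if i = 0 ∧ j = 0 then γ else 0)) * Real.sinh (((L : ℝ) + 1 - (j : ℝ)) * x)) (L + 1)]
  have key : ∀ j : ℕ, ((if i + 1 = j ∨ j + 1 = i then Real.sqrt d else 0) +
      (if i = 0 ∧ j = 0 then γ else 0)) * Real.sinh (((L : ℝ) + 1 - (j : ℝ)) * x)
      = (if i + 1 = j then Real.sqrt d * Real.sinh (((L : ℝ) + 1 - (j : ℝ)) * x) else 0)
      + (if i - 1 = j then (if i = 0 then γ else Real.sqrt d) *
          Real.sinh (((L : ℝ) + 1 - (j : ℝ)) * x) else 0) := by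
    intro j
    by_cases h1 : i + 1 = j
    · have h2 : ¬ (i = 0 ∧ j = 0) := by omega
      have h3 : ¬ (i - 1 = j) := by omega
      simp only [h1, h2, h3, true_or, if_true, if_false, add_zero]
    · by_cases h0 : i = 0
      · subst h0
        by_cases hj : j = 0
        · subst hj; simp
        · have h3 : ¬ (0 = j) := by omega
          have h4 : ¬ (0 + 1 = j) := by omega
          simp [hj, h3, h4]
      · by_cases h3 : i - 1 = j
        · have h4 : j + 1 = i := by omega
          simp [h1, h0, h3, h4]
        · have h4 : ¬ (j + 1 = i) := by omega
          simp [h1, h0, h3, h4]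
  rw [Finset.sum_congr rfl (fun j _ => key j), Finset.sum_add_distrib, Finset.sum_ite_eq,
    Finset.sum_ite_eq]
  have hm : i - 1 ∈ Finset.range (L + 1) := by simp; omega
  rw [if_pos hm]
  have e1 : (if i + 1 ∈ Finset.range (L + 1) then
      Real.sqrt d * Real.sinh (((L : ℝ) + 1 - ((i + 1 : ℕ) : ℝ)) * x) else 0) =
      Real.sqrt d * Real.sinh (((L : ℝ) + 1 - (i : ℝ)) * x - x) := by
    split_ifs with hlt
    · congr 2; push_cast; ring
    · have : i = L := by simp at hlt; omega
      subst this
      have : ((i : ℝ) + 1 - (i : ℝ)) * x - x = 0 := by ring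
      rw [this]; simp
  have e2 : (if i = 0 then γ else Real.sqrt d) *
      Real.sinh (((L : ℝ) + 1 - ((i - 1 : ℕ) : ℝ)) * x) =
      Real.sqrt d * Real.sinh (((L : ℝ) + 1 - (i : ℝ)) * x + x) := by
    split_ifs with h0
    · subst h0
      have a1 : ((L : ℝ) + 1 - ((0 : ℕ) : ℝ)) * x + x = (L + 2) * x := by push_cast; ring
      rw [a1, ← h]; simp
    · obtain ⟨k, rfl⟩ := Nat.exists_eq_succ_of_ne_zero h0
      congr 2
      simp only [Nat.succ_eq_add_one, Nat.add_sub_cancel]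
      push_cast; ring
  rw [e1, e2, Real.sinh_sub, Real.sinh_add]
  ring
end
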